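/- Let μ be a tuple of non-negative integers (a holomorphic type) and let Γ_1, Γ_2, Γ_3 be realizable two-level graphs of type μ. If the profiles (Γ_1,Γ_2) and (Γ_2,Γ_3) are both non-empty, then the profile (Γ_1,Γ_2,Γ_3) is non-empty, i.e. there exists a realizable four-level graph Λ of type μ without horizontal edges with δ_1(Λ)≅Γ_1, δ_2(Λ)≅Γ_2 and δ_3(Λ)≅Γ_3. -/

import Mathlib

/-- An *enhanced level graph* of type `μ : Fin n → ℤ`: a finite multigraph
with vertex set `V` and edge set `E` (each edge `e` consisting of an upper
half-edge `e⁺` attached at `src e` and a lower half-edge `e⁻` attached at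
`dst e`), together with `n` labelled legs, a genus function, a level function
normalised to take values in `{0, -1, …, -L}` and an enhancement `κ` which
vanishes exactly on the horizontal edges. -/
structure ELG (n : ℕ) (μ : Fin n → ℤ) where
  V : Type
  E : Type
  fintypeV : Fintype V
  decEqV : DecidableEq V
  fintypeE : Fintype E
  decEqE : DecidableEq E
  /-- the vertex carrying the upper half-edge `e⁺` -/
  src : E → V
  /-- the vertex carrying the lower half-edge `e⁻` -/
  dst : E → V
  /-- the vertex carrying the `i`-th labelled leg -/
  legAt : Fin n → V
  genus : V → ℕ
  level : V → ℤ
  /-- the levels are `0, -1, …, -L` -/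
  L : ℕ
  level_mem : ∀ v, -(L : ℤ) ≤ level v ∧ level v ≤ 0
  level_surj : ∀ j : Fin (L + 1), ∃ v, level v = -(j : ℤ)
  level_mono : ∀ e, level (dst e) ≤ level (src e)
  /-- the enhancement `κ` -/
  kappa : E → ℕ
  kappa_zero_iff : ∀ e, kappa e = 0 ↔ level (src e) = level (dst e)

attribute [instance] ELG.fintypeV ELG.decEqV ELG.fintypeE ELG.decEqE

namespace ELG

variable {n : ℕ} {μ : Fin n → ℤ}

/-- The order function: the `i`-th leg has order `μ i`, the upper half-edge of
`e` has order `κ e - 1`, the lower one has order `-κ e - 1`.  The *degree* of a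
vertex is the sum of the orders of all legs and half-edges attached to it. -/
def deg (Γ : ELG n μ) (v : Γ.V) : ℤ :=
  (∑ i ∈ Finset.univ.filter (fun i => Γ.legAt i = v), μ i)
    + (∑ e ∈ Finset.univ.filter (fun e => Γ.src e = v), ((Γ.kappa e : ℤ) - 1))
    + (∑ e ∈ Finset.univ.filter (fun e => Γ.dst e = v), (-(Γ.kappa e : ℤ) - 1))

/-- The enhancement is *admissible* if `deg v = 2 g(v) - 2` for every vertex. -/
def Admissible (Γ : ELG n μ) : Prop :=
  ∀ v, Γ.deg v = 2 * (Γ.genus v : ℤ) - 2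

/-- Number of legs at a vertex. -/
def numLegsAt (Γ : ELG n μ) (v : Γ.V) : ℕ :=
  (Finset.univ.filter (fun i => Γ.legAt i = v)).card

/-- Number of half-edges at a vertex (a loop counts twice). -/
def numHalfEdgesAt (Γ : ELG n μ) (v : Γ.V) : ℕ :=
  (Finset.univ.filter (fun e => Γ.src e = v)).card
    + (Finset.univ.filter (fun e => Γ.dst e = v)).card

/-- Stability: `2 g(v) - 2` plus the number of legs and half-edges at `v` is
positive for every vertex `v`. -/
def Stable (Γ : ELG n μ) : Prop :=
  ∀ v, 0 < 2 * (Γ.genus v : ℤ) - 2 + (Γ.numLegsAt v : ℤ) + (Γ.numHalfEdgesAt v : ℤ)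

/-- The edge `e` connects the vertices `a` and `b` (in either direction). -/
def Connects (Γ : ELG n μ) (e : Γ.E) (a b : Γ.V) : Prop :=
  (Γ.src e = a ∧ Γ.dst e = b) ∨ (Γ.src e = b ∧ Γ.dst e = a)

/-- Adjacency via some edge. -/
def Adj (Γ : ELG n μ) (a b : Γ.V) : Prop := ∃ e, Γ.Connects e a b

/-- Connectivity of the graph. -/
def Connected (Γ : ELG n μ) : Prop :=
  Nonempty Γ.V ∧ ∀ a b : Γ.V, Relation.ReflTransGen Γ.Adj a b

/-- The total genus `g = ∑ g(v) + |E| - |V| + 1` of a connected graph. -/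
def totalGenus (Γ : ELG n μ) : ℤ :=
  (∑ v, (Γ.genus v : ℤ)) + (Fintype.card Γ.E : ℤ) - (Fintype.card Γ.V : ℤ) + 1

/-- No horizontal edges. -/
def NoHorizontal (Γ : ELG n μ) : Prop :=
  ∀ e, Γ.level (Γ.src e) ≠ Γ.level (Γ.dst e)

/-- The multiset of absolute values `b` of the *negative* orders `-b` of the
legs and half-edges at a vertex `v`. -/
def poleOrders (Γ : ELG n μ) (v : Γ.V) : Multiset ℤ :=
  ((Finset.univ.filter (fun i => Γ.legAt i = v ∧ μ i < 0)).val.map (fun i => -μ i))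
    + ((Finset.univ.filter (fun e => Γ.src e = v ∧ ((Γ.kappa e : ℤ) - 1) < 0)).val.map
        (fun e => -((Γ.kappa e : ℤ) - 1)))
    + ((Finset.univ.filter (fun e => Γ.dst e = v)).val.map (fun e => (Γ.kappa e : ℤ) + 1))

/-- A vertex is *inconvenient* if it has genus `0`, no leg or half-edge at it
has order `-1`, and among the absolute values `b₁, …, b_p` of the negative
orders at `v` there is some `bᵢ > b₁ + ⋯ + b_p - p - 1`. -/
def Inconvenient (Γ : ELG n μ) (v : Γ.V) : Prop :=
  Γ.genus v = 0 ∧ (1 : ℤ) ∉ Γ.poleOrders v ∧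
    ∃ b ∈ Γ.poleOrders v,
      (Γ.poleOrders v).sum - (Multiset.card (Γ.poleOrders v) : ℤ) - 1 < b

/-- There is a simple cycle based at `v` all of whose vertices lie on levels
`≥ ℓ(v)`. -/
def HasHighCycleAt (Γ : ELG n μ) (v : Γ.V) : Prop :=
  ∃ (m : ℕ) (hm : 2 ≤ m) (vs : Fin m → Γ.V) (es : Fin m → Γ.E),
    Function.Injective vs ∧ Function.Injective es ∧ vs ⟨0, by omega⟩ = v ∧
    (∀ k : Fin m, Γ.Connects (es k) (vs k) (vs ⟨(k.val + 1) % m, Nat.mod_lt _ (by omega)⟩)) ∧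
    (∀ k : Fin m, Γ.level v ≤ Γ.level (vs k))

/-- Realizability of a connected stable admissible enhanced level graph without
horizontal edges over a holomorphic stratum: every inconvenient vertex lies on
a simple cycle not passing below its own level. -/
def Realizable (Γ : ELG n μ) : Prop :=
  Γ.Connected ∧ Γ.Stable ∧ Γ.Admissible ∧ Γ.NoHorizontal ∧
    ∀ v, Γ.Inconvenient v → Γ.HasHighCycleAt v

/-- An isomorphism of enhanced level graphs of the same type: bijections of
vertices and edges preserving incidence, genus, level, enhancement and fixing
each labelled leg. -/
structure Iso (Γ₁ Γ₂ : ELG n μ) where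
  vEquiv : Γ₁.V ≃ Γ₂.V
  eEquiv : Γ₁.E ≃ Γ₂.E
  src_map : ∀ e, Γ₂.src (eEquiv e) = vEquiv (Γ₁.src e)
  dst_map : ∀ e, Γ₂.dst (eEquiv e) = vEquiv (Γ₁.dst e)
  leg_map : ∀ i, Γ₂.legAt i = vEquiv (Γ₁.legAt i)
  genus_map : ∀ v, Γ₂.genus (vEquiv v) = Γ₁.genus v
  level_map : ∀ v, Γ₂.level (vEquiv v) = Γ₁.level v
  kappa_map : ∀ e, Γ₂.kappa (eEquiv e) = Γ₁.kappa e

/-- The edge `e` crosses the `i`-th level passage (between levels `-(i-1)` and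
`-i`). -/
def Crosses (Γ : ELG n μ) (e : Γ.E) (i : ℕ) : Prop :=
  -(i : ℤ) + 1 ≤ Γ.level (Γ.src e) ∧ Γ.level (Γ.dst e) ≤ -(i : ℤ)

instance (Γ : ELG n μ) (e : Γ.E) (i : ℕ) : Decidable (Γ.Crosses e i) :=
  inferInstanceAs (Decidable (_ ∧ _))

/-- The set of edges contracted by the undegeneration `δ_I`: those crossing no
level passage in `I`. -/
def contractedEdges (Γ : ELG n μ) (I : Finset ℕ) : Finset Γ.E :=
  Finset.univ.filter (fun e => ∀ i ∈ I, ¬ Γ.Crosses e i)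

/-- Two vertices are related if some edge of `T` connects them. -/
def contractRel (Γ : ELG n μ) (T : Finset Γ.E) (a b : Γ.V) : Prop :=
  ∃ e ∈ T, Γ.Connects e a b

/-- Witness data exhibiting `Δ` as the undegeneration `δ_I(Γ)`: the vertices of
`Δ` are the connected components of the edges of `Γ` contracted by `δ_I`, the
edges of `Δ` are the remaining edges with their enhancements, the legs keep
their positions, the genus of a merged vertex is the sum of the genera of its
vertices plus the first Betti number of the merged component, and the level
function is induced by collapsing the contracted level passages. -/
structure UndegenData (Γ : ELG n μ) (I : Finset ℕ) (Δ : ELG n μ) where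
  vmap : Γ.V → Δ.V
  vmap_surj : Function.Surjective vmap
  fiber_eq : ∀ a b, vmap a = vmap b ↔
    Relation.EqvGen (Γ.contractRel (Γ.contractedEdges I)) a b
  eEquiv : {e : Γ.E // e ∉ Γ.contractedEdges I} ≃ Δ.E
  src_map : ∀ e, Δ.src (eEquiv e) = vmap (Γ.src e.val)
  dst_map : ∀ e, Δ.dst (eEquiv e) = vmap (Γ.dst e.val)
  kappa_map : ∀ e, Δ.kappa (eEquiv e) = Γ.kappa e.val
  leg_map : ∀ i, Δ.legAt i = vmap (Γ.legAt i)
  genus_map : ∀ w : Δ.V,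
    (Δ.genus w : ℤ) =
      (∑ v ∈ Finset.univ.filter (fun v => vmap v = w), (Γ.genus v : ℤ))
        + (((Γ.contractedEdges I).filter (fun e => vmap (Γ.src e) = w)).card : ℤ)
        - ((Finset.univ.filter (fun v : Γ.V => vmap v = w)).card : ℤ) + 1
  level_map : ∀ v, Δ.level (vmap v) =
    -(((I.filter (fun i : ℕ => Γ.level v ≤ -(i : ℤ))).card : ℤ))
  newL : Δ.L = I.card

/-- `Δ` is (isomorphic to) the undegeneration `δ_I(Γ)`. -/
def IsUndegenOf (Γ : ELG n μ) (I : Finset ℕ) (Δ : ELG n μ) : Prop :=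
  Nonempty (Γ.UndegenData I Δ)

end ELG

open ELG

/-- `Λ` is a realizable `(k+1)`-level graph (without horizontal edges) lying in
the profile `(Γ₁, …, Γ_k)`, i.e. `δ_i(Λ) ≅ Γᵢ` for all `i`. -/
def InProfile {n : ℕ} {μ : Fin n → ℤ} {k : ℕ} (Λ : ELG n μ) (Γs : Fin k → ELG n μ) : Prop :=
  Λ.Realizable ∧ Λ.L = k ∧ ∀ i : Fin k, Λ.IsUndegenOf {(i : ℕ) + 1} (Γs i)

/-- The profile `(Γ₁, …, Γ_k)` is non-empty. -/
def ProfileNonEmpty {n : ℕ} {μ : Fin n → ℤ} {k : ℕ} (Γs : Fin k → ELG n μ) : Prop :=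
  ∃ Λ : ELG n μ, InProfile Λ Γs

/-! The four-level graph is glued from the three-level graphs `X` and `Y` realising the two given
profiles, as their fibre product over the common two-level undegeneration `Γ`: the levels of `X` are
put above those of `Y`, identifying the lowest level passage of `X` with the highest one of `Y`.
Every vertex of `Γ` is degenerated in at most one of `X` and `Y`, so that depths and genera of the
glued graph are given by inclusion-exclusion.

Every level of the glued graph survives unmerged in the undegeneration to `X` or in that to `Y`, and
at such a vertex the two graphs look alike; this gives stability and admissibility, and identifies
the inconvenient vertices. A simple cycle through `v` amounts to an edge at `v` together with a walk
between its ends avoiding it. Such walks lift along an undegeneration, because merged vertices are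
joined by contracted edges, and without reaching below the level of `v`, which is not merged. -/

namespace ELG

/-! ### Depths and level passages -/

section PassageCount

/-- The number of level passages in `I` lying above depth `m`: the undegeneration `δ_I` moves a
vertex of depth `m` to depth `passageCount I m`. -/
def passageCount (I : Finset ℕ) (m : ℕ) : ℕ := (I.filter (· ≤ m)).card

theorem passageCount_mono (I : Finset ℕ) : Monotone (passageCount I) := fun _ _ h =>
  Finset.card_le_card <| Finset.monotone_filter_right I fun _ _ hi => le_trans hi h

theorem passageCount_le_iff_of_mem {I : Finset ℕ} {i m : ℕ} (hi : i ∈ I) :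
    passageCount I i ≤ passageCount I m ↔ i ≤ m := by
  refine ⟨fun h => ?_, fun h => passageCount_mono I h⟩
  by_contra! hlt
  refine h.not_gt (Finset.card_lt_card (Finset.ssubset_iff_of_subset ?_ |>.2 ⟨i, ?_, ?_⟩))
  · exact Finset.monotone_filter_right I fun _ _ hj => le_trans hj hlt.le
  · simpa using hi
  · simpa using fun _ => hlt

theorem passageCount_eq_iff {I : Finset ℕ} {m m' : ℕ} (h : m ≤ m') :
    passageCount I m = passageCount I m' ↔ ∀ i ∈ I, ¬ (m < i ∧ i ≤ m') := by
  have hsub : I.filter (· ≤ m) ⊆ I.filter (· ≤ m') :=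
    Finset.monotone_filter_right I fun _ _ hi => le_trans hi h
  refine ⟨fun heq i hi ⟨hmi, him⟩ => hmi.not_ge ?_, fun hI => ?_⟩
  · exact (passageCount_le_iff_of_mem hi).1 (heq ▸ passageCount_mono I him)
  · refine congrArg Finset.card (hsub.antisymm fun i hi => ?_)
    rw [Finset.mem_filter] at hi ⊢
    exact ⟨hi.1, not_lt.1 fun hmi => hI i hi.1 ⟨hmi, hi.2⟩⟩

theorem passageCount_injOn (I : Finset ℕ) : Set.InjOn (passageCount I) I := fun _ hi _ hj h =>
  le_antisymm ((passageCount_le_iff_of_mem hi).1 h.le) ((passageCount_le_iff_of_mem hj).1 h.ge)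

theorem passageCount_image {I K : Finset ℕ} (hK : K ⊆ I) (m : ℕ) :
    passageCount (K.image (passageCount I)) (passageCount I m) = passageCount K m := by
  rw [passageCount, Finset.filter_image, Finset.card_image_of_injOn, passageCount]
  · exact congrArg _ (Finset.filter_congr fun i hi => passageCount_le_iff_of_mem (hK hi))
  · exact (passageCount_injOn I).mono fun i hi => hK (Finset.mem_filter.1 hi).1

theorem passageCount_singleton (i m : ℕ) : passageCount {i} m = if i ≤ m then 1 else 0 := by
  rw [passageCount, Finset.filter_singleton]
  split_ifs <;> rfl

theorem passageCount_Icc (c d m : ℕ) : passageCount (Finset.Icc (c + 1) d) m = min m d - c := by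
  have : (Finset.Icc (c + 1) d).filter (· ≤ m) = Finset.Icc (c + 1) (min m d) := by
    ext i
    simp only [Finset.mem_filter, Finset.mem_Icc, le_min_iff]
    tauto
  rw [passageCount, this, Nat.card_Icc, Nat.add_sub_add_right]

theorem passageCount_Icc_one (d m : ℕ) : passageCount (Finset.Icc 1 d) m = min m d :=
  passageCount_Icc 0 d m

end PassageCount

variable {n : ℕ} {μ : Fin n → ℤ}

section Depth

variable {Γ : ELG n μ}

/-- The depth of a vertex below the top level, so that `ℓ(v) = -depth v`. -/
def depth (Γ : ELG n μ) (v : Γ.V) : ℕ := (-Γ.level v).toNat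

theorem level_eq_neg_depth (v : Γ.V) : Γ.level v = -(Γ.depth v : ℤ) := by
  have := (Γ.level_mem v).2
  rw [depth]
  omega

theorem level_le_iff_depth_le {v w : Γ.V} : Γ.level v ≤ Γ.level w ↔ Γ.depth w ≤ Γ.depth v := by
  rw [level_eq_neg_depth, level_eq_neg_depth]
  omega

theorem level_le_neg_iff {v : Γ.V} {i : ℕ} : Γ.level v ≤ -(i : ℤ) ↔ i ≤ Γ.depth v := by
  rw [level_eq_neg_depth]
  omega

theorem depth_le (v : Γ.V) : Γ.depth v ≤ Γ.L := by
  have := (Γ.level_mem v).1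
  rw [level_eq_neg_depth] at this
  omega

theorem exists_depth_eq {m : ℕ} (hm : m ≤ Γ.L) : ∃ v, Γ.depth v = m := by
  obtain ⟨v, hv⟩ := Γ.level_surj ⟨m, Nat.lt_succ_of_le hm⟩
  rw [level_eq_neg_depth] at hv
  exact ⟨v, by simpa using hv⟩

theorem depth_src_le_depth_dst (e : Γ.E) : Γ.depth (Γ.src e) ≤ Γ.depth (Γ.dst e) :=
  level_le_iff_depth_le.1 (Γ.level_mono e)

theorem NoHorizontal.depth_src_ne (h : Γ.NoHorizontal) (e : Γ.E) :
    Γ.depth (Γ.src e) ≠ Γ.depth (Γ.dst e) := fun heq =>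
  h e (by rw [level_eq_neg_depth, level_eq_neg_depth, heq])

theorem mem_contractedEdges {I : Finset ℕ} {e : Γ.E} : e ∈ Γ.contractedEdges I ↔
    passageCount I (Γ.depth (Γ.src e)) = passageCount I (Γ.depth (Γ.dst e)) := by
  have hcross (i : ℕ) : Γ.Crosses e i ↔ Γ.depth (Γ.src e) < i ∧ i ≤ Γ.depth (Γ.dst e) := by
    rw [Crosses, level_eq_neg_depth, level_eq_neg_depth]
    omega
  simp only [contractedEdges, Finset.mem_filter, Finset.mem_univ, true_and, hcross,
    passageCount_eq_iff (depth_src_le_depth_dst e)]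

theorem contractedEdges_anti {I K : Finset ℕ} (hK : K ⊆ I) :
    Γ.contractedEdges I ⊆ Γ.contractedEdges K :=
  Finset.monotone_filter_right _ fun _ _ he i hi => he i (hK hi)

end Depth

/-! ### Undegenerations -/

section Undegeneration

theorem Connects.symm {Γ : ELG n μ} {e : Γ.E} {a b : Γ.V} (h : Γ.Connects e a b) :
    Γ.Connects e b a :=
  Or.symm h

instance contractRel_symm (Γ : ELG n μ) (T : Finset Γ.E) : Std.Symm (Γ.contractRel T) where
  symm _ _ := fun ⟨e, he, h⟩ => ⟨e, he, h.symm⟩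

namespace UndegenData

variable {Γ Δ : ELG n μ} {I : Finset ℕ} (D : Γ.UndegenData I Δ)

theorem vmap_eq_iff {a b : Γ.V} : D.vmap a = D.vmap b ↔
    Relation.ReflTransGen (Γ.contractRel (Γ.contractedEdges I)) a b := by
  rw [D.fiber_eq, Relation.EqvGen.eqvGen_eq_reflTransGen]

theorem vmap_src_eq_vmap_dst {e : Γ.E} (he : e ∈ Γ.contractedEdges I) :
    D.vmap (Γ.src e) = D.vmap (Γ.dst e) :=
  D.vmap_eq_iff.2 (.single ⟨e, he, .inl ⟨rfl, rfl⟩⟩)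

theorem depth_vmap (v : Γ.V) : Δ.depth (D.vmap v) = passageCount I (Γ.depth v) := by
  simp only [depth.eq_1 Δ, D.level_map, neg_neg, Int.toNat_natCast, passageCount, level_le_neg_iff]

/-- The edges of `Γ` are those contracted by the undegeneration together with those of `Δ`. -/
def edgeDecomp : {e : Γ.E // e ∈ Γ.contractedEdges I} ⊕ Δ.E ≃ Γ.E :=
  ((Equiv.refl _).sumCongr D.eEquiv.symm).trans (Equiv.sumCompl _)

/-- The edge of `Γ` surviving as a given edge of the undegeneration. -/
def edge : Δ.E ↪ Γ.E := D.eEquiv.symm.toEmbedding.trans (Function.Embedding.subtype _)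

theorem eEquiv_symm_val (f : Δ.E) : (D.eEquiv.symm f : Γ.E) = D.edge f := rfl

theorem edge_notMem (f : Δ.E) : D.edge f ∉ Γ.contractedEdges I := (D.eEquiv.symm f).2

theorem exists_edge_eq {e : Γ.E} (he : e ∉ Γ.contractedEdges I) : ∃ f, D.edge f = e :=
  ⟨D.eEquiv ⟨e, he⟩, by simp [edge]⟩

theorem vmap_src_edge (f : Δ.E) : D.vmap (Γ.src (D.edge f)) = Δ.src f := by
  simpa [eEquiv_symm_val] using (D.src_map (D.eEquiv.symm f)).symm

theorem vmap_dst_edge (f : Δ.E) : D.vmap (Γ.dst (D.edge f)) = Δ.dst f := by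
  simpa [eEquiv_symm_val] using (D.dst_map (D.eEquiv.symm f)).symm

theorem kappa_edge (f : Δ.E) : Γ.kappa (D.edge f) = Δ.kappa f := by
  simpa [eEquiv_symm_val] using (D.kappa_map (D.eEquiv.symm f)).symm

theorem genus_sub_one (w : Δ.V) : (Δ.genus w : ℤ) - 1 =
    ∑ v with D.vmap v = w, ((Γ.genus v : ℤ) - 1)
      + ((Γ.contractedEdges I).filter fun e => D.vmap (Γ.src e) = w).card := by
  rw [D.genus_map, Finset.sum_sub_distrib, Finset.sum_const, nsmul_one]
  ring

/-- Undegeneration data given by a contraction of vertices and an embedding of the surviving edges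
onto the complement of the contracted ones, with the genus in Euler characteristic form. -/
noncomputable def ofEdge (vmap : Γ.V → Δ.V) (edge : Δ.E ↪ Γ.E)
    (vmap_surj : Function.Surjective vmap)
    (vmap_src_eq_vmap_dst : ∀ e ∈ Γ.contractedEdges I, vmap (Γ.src e) = vmap (Γ.dst e))
    (connected : ∀ a b, vmap a = vmap b →
      Relation.ReflTransGen (Γ.contractRel (Γ.contractedEdges I)) a b)
    (range_edge : ∀ e, e ∉ Γ.contractedEdges I ↔ e ∈ Set.range edge)
    (vmap_src_edge : ∀ f, vmap (Γ.src (edge f)) = Δ.src f)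
    (vmap_dst_edge : ∀ f, vmap (Γ.dst (edge f)) = Δ.dst f)
    (kappa_edge : ∀ f, Γ.kappa (edge f) = Δ.kappa f)
    (legAt_eq : ∀ i, Δ.legAt i = vmap (Γ.legAt i))
    (genus_sub_one : ∀ w, (Δ.genus w : ℤ) - 1 = ∑ v with vmap v = w, ((Γ.genus v : ℤ) - 1)
      + ((Γ.contractedEdges I).filter fun e => vmap (Γ.src e) = w).card)
    (depth_vmap : ∀ v, Δ.depth (vmap v) = passageCount I (Γ.depth v))
    (L_eq : Δ.L = I.card) : Γ.UndegenData I Δ where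
  vmap := vmap
  vmap_surj := vmap_surj
  fiber_eq a b := by
    rw [Relation.EqvGen.eqvGen_eq_reflTransGen]
    refine ⟨connected a b, fun h => ?_⟩
    induction h with
    | refl => rfl
    | tail _ hstep ih =>
      obtain ⟨e, he, ⟨rfl, rfl⟩ | ⟨rfl, rfl⟩⟩ := hstep
      · exact ih.trans (vmap_src_eq_vmap_dst e he)
      · exact ih.trans (vmap_src_eq_vmap_dst e he).symm
  eEquiv := (Equiv.subtypeEquivRight range_edge).trans (Equiv.ofInjective edge edge.injective).symm
  src_map e := by simp [← vmap_src_edge, Equiv.apply_ofInjective_symm]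
  dst_map e := by simp [← vmap_dst_edge, Equiv.apply_ofInjective_symm]
  kappa_map e := by simp [← kappa_edge, Equiv.apply_ofInjective_symm]
  leg_map := legAt_eq
  genus_map w := by
    have := genus_sub_one w
    rw [Finset.sum_sub_distrib, Finset.sum_const, nsmul_one] at this
    linarith
  level_map v := by
    simp only [level_eq_neg_depth (vmap v), depth_vmap, passageCount, level_le_neg_iff]
  newL := L_eq

/-- Paths in an undegeneration lift to `Γ`: `G` is a set of vertices over which the fibres of
`D.vmap` may be traversed. -/
theorem reflTransGen_lift {S : Finset Δ.E} {T : Finset Γ.E} {G : Set Δ.V}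
    (hST : ∀ f ∈ S, D.edge f ∈ T)
    (hT : ∀ e ∈ Γ.contractedEdges I, D.vmap (Γ.src e) ∈ G → e ∈ T)
    (hG : ∀ f ∈ S, Δ.src f ∈ G ∧ Δ.dst f ∈ G) {a b : Γ.V} (ha : D.vmap a ∈ G)
    (h : Relation.ReflTransGen (Δ.contractRel S) (D.vmap a) (D.vmap b)) :
    Relation.ReflTransGen (Γ.contractRel T) a b := by
  have fibre {a b : Γ.V} (ha : D.vmap a ∈ G) (hab : D.vmap a = D.vmap b) :
      Relation.ReflTransGen (Γ.contractRel T) a b := by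
    induction D.vmap_eq_iff.1 hab using Relation.ReflTransGen.head_induction_on with
    | refl => rfl
    | head hstep _ ih =>
      obtain ⟨e, he, hc⟩ := hstep
      have hsd := D.vmap_src_eq_vmap_dst he
      have hac : D.vmap _ = D.vmap _ := D.vmap_eq_iff.2 (.single ⟨e, he, hc⟩)
      refine .head ⟨e, hT e he ?_, hc⟩ (ih (hac ▸ ha) (hac ▸ hab))
      obtain ⟨rfl, -⟩ | ⟨-, rfl⟩ := hc
      · exact ha
      · exact hsd ▸ ha
  generalize hx : D.vmap a = x at h
  induction h using Relation.ReflTransGen.head_induction_on generalizing a with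
  | refl => exact fibre ha hx
  | head hstep _ ih =>
    obtain ⟨f, hf, ⟨rfl, rfl⟩ | ⟨rfl, rfl⟩⟩ := hstep
    · have hstart := fibre ha (hx.trans (D.vmap_src_edge f).symm)
      refine hstart.trans (.head ⟨_, hST f hf, .inl ⟨rfl, rfl⟩⟩ (ih ?_ (D.vmap_dst_edge f)))
      exact (D.vmap_dst_edge f) ▸ (hG f hf).2
    · have hstart := fibre ha (hx.trans (D.vmap_dst_edge f).symm)
      refine hstart.trans (.head ⟨_, hST f hf, .inr ⟨rfl, rfl⟩⟩ (ih ?_ (D.vmap_src_edge f)))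
      exact (D.vmap_src_edge f) ▸ (hG f hf).1

theorem edge_mem_contractedEdges {K : Finset ℕ} (hK : K ⊆ I) {f : Δ.E} :
    D.edge f ∈ Γ.contractedEdges K ↔ f ∈ Δ.contractedEdges (K.image (passageCount I)) := by
  simp only [mem_contractedEdges, ← D.vmap_src_edge, ← D.vmap_dst_edge, D.depth_vmap,
    passageCount_image hK]

theorem sum_contractedEdges {K : Finset ℕ} (hK : K ⊆ I) (F : Γ.E → ℤ) :
    ∑ e ∈ Γ.contractedEdges K, F e = ∑ e ∈ Γ.contractedEdges I, F e
      + ∑ f ∈ Δ.contractedEdges (K.image (passageCount I)), F (D.edge f) := by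
  have hunion : Γ.contractedEdges K = Γ.contractedEdges I ∪
      (Δ.contractedEdges (K.image (passageCount I))).map D.edge := by
    ext e
    simp only [Finset.mem_union, Finset.mem_map]
    by_cases he : e ∈ Γ.contractedEdges I
    · exact iff_of_true (contractedEdges_anti hK he) (.inl he)
    · obtain ⟨f, rfl⟩ := D.exists_edge_eq he
      simp [he, D.edge_mem_contractedEdges hK]
  rw [hunion, Finset.sum_union, Finset.sum_map]
  refine Finset.disjoint_right.2 fun e he => ?_
  obtain ⟨f, -, rfl⟩ := Finset.mem_map.1 he
  exact D.edge_notMem f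

variable {Θ : ELG n μ} {K : Finset ℕ}

theorem genus_sub_one_trans (hK : K ⊆ I) (D' : Δ.UndegenData (K.image (passageCount I)) Θ)
    (w : Θ.V) : (Θ.genus w : ℤ) - 1 =
      ∑ v with D'.vmap (D.vmap v) = w, ((Γ.genus v : ℤ) - 1)
        + ((Γ.contractedEdges K).filter fun e => D'.vmap (D.vmap (Γ.src e)) = w).card := by
  have hvertices : ∑ u with D'.vmap u = w, ∑ v with D.vmap v = u, ((Γ.genus v : ℤ) - 1)
      = ∑ v with D'.vmap (D.vmap v) = w, ((Γ.genus v : ℤ) - 1) := by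
    simp only [Finset.sum_fiberwise_eq_sum_filter, Finset.mem_filter, Finset.mem_univ, true_and]
  have hedges : ∑ u with D'.vmap u = w,
      (((Γ.contractedEdges I).filter fun e => D.vmap (Γ.src e) = u).card : ℤ)
      = ((Γ.contractedEdges I).filter fun e => D'.vmap (D.vmap (Γ.src e)) = w).card := by
    simp only [Finset.card_eq_sum_ones, Nat.cast_sum, Finset.sum_fiberwise_eq_sum_filter,
      Finset.mem_filter, Finset.mem_univ, true_and]
  have hcount : (((Γ.contractedEdges K).filter fun e => D'.vmap (D.vmap (Γ.src e)) = w).card : ℤ)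
      = ((Γ.contractedEdges I).filter fun e => D'.vmap (D.vmap (Γ.src e)) = w).card
        + ((Δ.contractedEdges (K.image (passageCount I))).filter
            fun f => D'.vmap (Δ.src f) = w).card := by
    simp only [Finset.natCast_card_filter, D.sum_contractedEdges hK, D.vmap_src_edge]
  rw [D'.genus_sub_one, Finset.sum_congr rfl fun u _ => D.genus_sub_one u,
    Finset.sum_add_distrib, hvertices, hedges, hcount]
  ring

end UndegenData

theorem IsUndegenOf.trans {Γ Δ Θ : ELG n μ} {I K : Finset ℕ} (hK : K ⊆ I)
    (h : Γ.IsUndegenOf I Δ) (h' : Δ.IsUndegenOf (K.image (passageCount I)) Θ) :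
    Γ.IsUndegenOf K Θ := by
  obtain ⟨D⟩ := h
  obtain ⟨D'⟩ := h'
  refine ⟨.ofEdge (D'.vmap ∘ D.vmap) (D'.edge.trans D.edge) (D'.vmap_surj.comp D.vmap_surj)
    (fun e he => ?_) (fun a b hab => ?_) (fun e => ?_)
    (fun f => by simp [D.vmap_src_edge, D'.vmap_src_edge])
    (fun f => by simp [D.vmap_dst_edge, D'.vmap_dst_edge])
    (fun f => by simp [D.kappa_edge, D'.kappa_edge])
    (fun i => by simp [D.leg_map, D'.leg_map])
    (D.genus_sub_one_trans hK D')
    (fun v => by simp [D'.depth_vmap, D.depth_vmap, passageCount_image hK])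
    (by rw [D'.newL, Finset.card_image_of_injOn ((passageCount_injOn I).mono hK)])⟩
  · by_cases heI : e ∈ Γ.contractedEdges I
    · exact congrArg D'.vmap (D.vmap_src_eq_vmap_dst heI)
    · obtain ⟨f, rfl⟩ := D.exists_edge_eq heI
      simpa [D.vmap_src_edge, D.vmap_dst_edge] using
        D'.vmap_src_eq_vmap_dst ((D.edge_mem_contractedEdges hK).1 he)
  · exact D.reflTransGen_lift (G := .univ) (fun f hf => (D.edge_mem_contractedEdges hK).2 hf)
      (fun e he _ => contractedEdges_anti hK he) (fun _ _ => ⟨trivial, trivial⟩) trivial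
      (D'.vmap_eq_iff.1 hab)
  · refine ⟨fun he => ?_, ?_⟩
    · obtain ⟨f, rfl⟩ := D.exists_edge_eq fun heI => he (contractedEdges_anti hK heI)
      rw [D.edge_mem_contractedEdges hK] at he
      obtain ⟨f', rfl⟩ := D'.exists_edge_eq he
      exact ⟨f', rfl⟩
    · rintro ⟨f, rfl⟩ he
      exact D'.edge_notMem f ((D.edge_mem_contractedEdges hK).1 he)

end Undegeneration

/-! ### Vertices untouched by an undegeneration -/

section Untouched

variable {Γ Δ : ELG n μ} {I : Finset ℕ} {v : Γ.V}

/-- No edge at `v` is contracted by `δ_I`, so that `δ_I(Γ)` looks like `Γ` at the image of `v`. -/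
def Uncontracted (Γ : ELG n μ) (I : Finset ℕ) (v : Γ.V) : Prop :=
  ∀ e ∈ Γ.contractedEdges I, Γ.src e ≠ v ∧ Γ.dst e ≠ v

/-- The level of `v` is not merged with any other level by `δ_I`. -/
def IsolatesLevel (Γ : ELG n μ) (I : Finset ℕ) (v : Γ.V) : Prop :=
  ∀ w, passageCount I (Γ.depth w) = passageCount I (Γ.depth v) → Γ.depth w = Γ.depth v

theorem IsolatesLevel.uncontracted (hv : Γ.IsolatesLevel I v) (hΓ : Γ.NoHorizontal) :
    Γ.Uncontracted I v := by
  intro e he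
  rw [mem_contractedEdges] at he
  constructor <;> rintro rfl
  · exact hΓ.depth_src_ne e (hv _ he.symm).symm
  · exact hΓ.depth_src_ne e (hv _ he)

theorem IsolatesLevel.depth_le_of_depth_vmap_le (hv : Γ.IsolatesLevel I v)
    (D : Γ.UndegenData I Δ) {w : Γ.V} (h : Δ.depth (D.vmap w) ≤ Δ.depth (D.vmap v)) :
    Γ.depth w ≤ Γ.depth v := by
  rw [D.depth_vmap, D.depth_vmap] at h
  by_contra! hlt
  exact hlt.ne' (hv w (h.antisymm (passageCount_mono I hlt.le)))

namespace UndegenData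

variable (D : Γ.UndegenData I Δ) (hv : Γ.Uncontracted I v)

include D hv

theorem vmap_eq_iff_of_uncontracted {w : Γ.V} : D.vmap w = D.vmap v ↔ w = v := by
  rw [eq_comm, D.vmap_eq_iff, Relation.reflTransGen_iff_eq]
  rintro b ⟨e, he, h | h⟩
  · exact (hv e he).1 h.1
  · exact (hv e he).2 h.2

theorem filter_src_eq : ({e | Γ.src e = v} : Finset Γ.E) =
    ({f | Δ.src f = D.vmap v} : Finset Δ.E).map D.edge := by
  ext e
  simp only [Finset.mem_filter, Finset.mem_univ, true_and, Finset.mem_map, ← D.vmap_src_edge,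
    D.vmap_eq_iff_of_uncontracted hv]
  constructor
  · intro he
    obtain ⟨f, rfl⟩ := D.exists_edge_eq fun hmem => (hv e hmem).1 he
    exact ⟨f, he, rfl⟩
  · rintro ⟨f, hf, rfl⟩
    exact hf

theorem filter_dst_eq : ({e | Γ.dst e = v} : Finset Γ.E) =
    ({f | Δ.dst f = D.vmap v} : Finset Δ.E).map D.edge := by
  ext e
  simp only [Finset.mem_filter, Finset.mem_univ, true_and, Finset.mem_map, ← D.vmap_dst_edge,
    D.vmap_eq_iff_of_uncontracted hv]
  constructor
  · intro he
    obtain ⟨f, rfl⟩ := D.exists_edge_eq fun hmem => (hv e hmem).2 he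
    exact ⟨f, he, rfl⟩
  · rintro ⟨f, hf, rfl⟩
    exact hf

theorem legAt_eq_iff {i : Fin n} : Γ.legAt i = v ↔ Δ.legAt i = D.vmap v := by
  rw [D.leg_map, D.vmap_eq_iff_of_uncontracted hv]

theorem deg_vmap : Δ.deg (D.vmap v) = Γ.deg v := by
  simp only [deg, D.filter_src_eq hv, D.filter_dst_eq hv, D.legAt_eq_iff hv, Finset.sum_map,
    D.kappa_edge]

theorem numLegsAt_vmap : Δ.numLegsAt (D.vmap v) = Γ.numLegsAt v := by
  simp only [numLegsAt, D.legAt_eq_iff hv]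

theorem numHalfEdgesAt_vmap : Δ.numHalfEdgesAt (D.vmap v) = Γ.numHalfEdgesAt v := by
  simp only [numHalfEdgesAt, D.filter_src_eq hv, D.filter_dst_eq hv, Finset.card_map]

theorem poleOrders_vmap : Δ.poleOrders (D.vmap v) = Γ.poleOrders v := by
  simp only [poleOrders, ← Finset.filter_filter, D.filter_src_eq hv, D.filter_dst_eq hv,
    D.legAt_eq_iff hv, Finset.filter_map, Finset.map_val, Multiset.map_map, Function.comp_def,
    D.kappa_edge]

theorem genus_vmap : Δ.genus (D.vmap v) = Γ.genus v := by
  have hfibre : ({w | D.vmap w = D.vmap v} : Finset Γ.V) = {v} := by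
    ext w
    simp [D.vmap_eq_iff_of_uncontracted hv]
  have hedges : (Γ.contractedEdges I).filter (fun e => D.vmap (Γ.src e) = D.vmap v) = ∅ :=
    Finset.filter_eq_empty_iff.2 fun e he h =>
      (hv e he).1 ((D.vmap_eq_iff_of_uncontracted hv).1 h)
  have := D.genus_sub_one (D.vmap v)
  rw [hfibre, hedges, Finset.sum_singleton, Finset.card_empty] at this
  omega

theorem inconvenient_vmap : Δ.Inconvenient (D.vmap v) ↔ Γ.Inconvenient v := by
  rw [Inconvenient, D.genus_vmap hv, D.poleOrders_vmap hv, Inconvenient]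

end UndegenData

end Untouched

/-! ### Cycles -/

section Cycles

variable {Γ Δ : ELG n μ}

/-- The edges of the subgraph of `Γ` on the vertices of level at least `ℓ(v)`. -/
def highEdges (Γ : ELG n μ) (v : Γ.V) : Finset Γ.E := {e | Γ.depth (Γ.dst e) ≤ Γ.depth v}

theorem Connects.mem_highEdges_iff {e : Γ.E} {a b v : Γ.V} (h : Γ.Connects e a b) :
    e ∈ Γ.highEdges v ↔ Γ.level v ≤ Γ.level a ∧ Γ.level v ≤ Γ.level b := by
  have := depth_src_le_depth_dst e
  simp only [highEdges, Finset.mem_filter, Finset.mem_univ, true_and, level_le_iff_depth_le]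
  obtain ⟨rfl, rfl⟩ | ⟨rfl, rfl⟩ := h <;> omega

/-- Reachable vertices are joined by a simple path, here recorded as its vertices and edges. -/
theorem exists_simple_path {T : Finset Γ.E} {a b : Γ.V}
    (h : Relation.ReflTransGen (Γ.contractRel T) a b) :
    ∃ (m : ℕ) (vs : Fin (m + 1) → Γ.V) (es : Fin m → Γ.E), Function.Injective vs ∧
      vs 0 = a ∧ vs (Fin.last m) = b ∧
      ∀ k, es k ∈ T ∧ Γ.Connects (es k) (vs k.castSucc) (vs k.succ) := by
  let G : SimpleGraph Γ.V := .fromRel (Γ.contractRel T)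
  have hreach : G.Reachable a b := by
    rw [SimpleGraph.reachable_iff_reflTransGen]
    refine h.lift' id fun x y hxy => ?_
    by_cases hne : x = y
    · exact hne ▸ .refl
    · exact .single ((SimpleGraph.fromRel_adj _ _ _).2 ⟨hne, .inl hxy⟩)
  obtain ⟨p, hp⟩ := hreach.exists_isPath
  have hstep (k : Fin p.length) : Γ.contractRel T (p.getVert k) (p.getVert (k + 1)) := by
    obtain ⟨-, h | h⟩ := (SimpleGraph.fromRel_adj _ _ _).1 (p.adj_getVert_succ k.2)
    · exact h
    · exact symm h
  choose es hes using hstep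
  refine ⟨p.length, fun k => p.getVert k, es, fun i j hij => ?_, by simp, by simp, hes⟩
  exact Fin.ext (hp.getVert_injOn (Nat.lt_succ_iff.1 i.2) (Nat.lt_succ_iff.1 j.2) hij)

theorem injective_edges_of_injective_vertices {m : ℕ} {vs : Fin (m + 1) → Γ.V} {es : Fin m → Γ.E}
    (hvs : Function.Injective vs) (hes : ∀ k, Γ.Connects (es k) (vs k.castSucc) (vs k.succ)) :
    Function.Injective es := by
  intro i j hij
  have hi := hes i
  have hj := hes j
  rw [hij] at hi
  simp only [Connects] at hi hj
  obtain ⟨hi, hi'⟩ | ⟨hi, hi'⟩ := hi <;> obtain ⟨hj, hj'⟩ | ⟨hj, hj'⟩ := hj <;>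
    have h₁ := congrArg Fin.val (hvs (hi.symm.trans hj)) <;>
    have h₂ := congrArg Fin.val (hvs (hi'.symm.trans hj')) <;>
    simp only [Fin.val_castSucc, Fin.val_succ] at h₁ h₂ <;> omega

theorem exists_bypass_of_hasHighCycleAt {v : Γ.V} (h : Γ.HasHighCycleAt v) :
    ∃ e ∈ Γ.highEdges v, ∃ u ≠ v, Γ.Connects e v u ∧
      Relation.ReflTransGen (Γ.contractRel ((Γ.highEdges v).erase e)) v u := by
  obtain ⟨m, hm, vs, es, hvs, hes, rfl, hconn, hlevel⟩ := h
  obtain ⟨m, rfl⟩ : ∃ k, m = k + 1 := ⟨m - 1, by omega⟩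
  have hhigh (k : Fin (m + 1)) : es k ∈ Γ.highEdges (vs 0) :=
    (hconn k).mem_highEdges_iff.2 ⟨hlevel _, hlevel _⟩
  have hpath (k : Fin (m + 1)) : Relation.ReflTransGen
      (Γ.contractRel ((Γ.highEdges (vs 0)).erase (es (Fin.last m)))) (vs 0) (vs k) := by
    induction k using Fin.induction with
    | zero => rfl
    | succ k ih =>
      have hk : Γ.Connects (es k.castSucc) (vs k.castSucc) (vs k.succ) := by
        convert hconn k.castSucc
        exact (Nat.mod_eq_of_lt (Nat.succ_lt_succ k.2)).symm
      exact ih.tail ⟨_, Finset.mem_erase.2 ⟨hes.ne (Fin.castSucc_lt_last k).ne, hhigh _⟩, hk⟩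
  refine ⟨es (Fin.last m), hhigh _, vs (Fin.last m), hvs.ne ?_, ?_, hpath _⟩
  · exact Fin.ne_of_gt (Fin.lt_def.2 (by simpa using by omega))
  · simpa using (hconn (Fin.last m)).symm

theorem hasHighCycleAt_of_bypass {v u : Γ.V} {e : Γ.E} (he : e ∈ Γ.highEdges v) (hu : u ≠ v)
    (hc : Γ.Connects e v u)
    (h : Relation.ReflTransGen (Γ.contractRel ((Γ.highEdges v).erase e)) v u) :
    Γ.HasHighCycleAt v := by
  obtain ⟨m, vs, es, hvs, rfl, rfl, hes⟩ := exists_simple_path h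
  have hm : 0 < m := Nat.pos_of_ne_zero fun hm => hu (by subst hm; rfl)
  have hconn (k : Fin m) := (hes k).2
  refine ⟨m + 1, by omega, vs, Fin.snoc es e, hvs, ?_, rfl, fun k => ?_, fun k => ?_⟩
  · refine Fin.snoc_injective_iff.2 ⟨injective_edges_of_injective_vertices hvs hconn, ?_⟩
    rintro ⟨k, rfl⟩
    exact Finset.notMem_erase _ _ (hes k).1
  · induction k using Fin.lastCases with
    | last => simpa using hc.symm
    | cast k =>
      rw [Fin.snoc_castSucc]
      convert hconn k
      exact Nat.mod_eq_of_lt (Nat.succ_lt_succ k.2)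
  · induction k using Fin.lastCases with
    | last => exact (hc.mem_highEdges_iff.1 he).2
    | cast k => exact ((hconn k).mem_highEdges_iff.1 (Finset.mem_of_mem_erase (hes k).1)).1

theorem UndegenData.exists_connects_edge {I : Finset ℕ} (D : Γ.UndegenData I Δ) {v : Γ.V}
    (hv : Γ.Uncontracted I v) {f : Δ.E} {w : Δ.V} (hf : Δ.Connects f (D.vmap v) w) :
    ∃ u, D.vmap u = w ∧ Γ.Connects (D.edge f) v u := by
  simp only [Connects, ← D.vmap_src_edge, ← D.vmap_dst_edge,
    D.vmap_eq_iff_of_uncontracted hv] at hf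
  obtain ⟨hsrc, hdst⟩ | ⟨hsrc, hdst⟩ := hf
  · exact ⟨_, hdst, .inl ⟨hsrc, rfl⟩⟩
  · exact ⟨_, hsrc, .inr ⟨rfl, hdst⟩⟩

theorem UndegenData.hasHighCycleAt_of_vmap {I : Finset ℕ} (D : Γ.UndegenData I Δ)
    (hΓ : Γ.NoHorizontal) {v : Γ.V} (hv : Γ.IsolatesLevel I v)
    (h : Δ.HasHighCycleAt (D.vmap v)) : Γ.HasHighCycleAt v := by
  obtain ⟨f, hf, w, hw, hc, hbypass⟩ := exists_bypass_of_hasHighCycleAt h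
  obtain ⟨u, rfl, hu⟩ := D.exists_connects_edge (hv.uncontracted hΓ) hc
  have hhigh {e : Γ.E} (he : Δ.depth (D.vmap (Γ.dst e)) ≤ Δ.depth (D.vmap v)) :
      e ∈ Γ.highEdges v :=
    Finset.mem_filter.2 ⟨Finset.mem_univ e, hv.depth_le_of_depth_vmap_le D he⟩
  have hedge {f : Δ.E} (hf : f ∈ Δ.highEdges (D.vmap v)) : D.edge f ∈ Γ.highEdges v :=
    hhigh (D.vmap_dst_edge f ▸ (Finset.mem_filter.1 hf).2)
  refine hasHighCycleAt_of_bypass (hedge hf) (ne_of_apply_ne D.vmap hw) hu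
    (D.reflTransGen_lift (G := {w | Δ.depth w ≤ Δ.depth (D.vmap v)})
      (fun f' hf' => ?_) (fun e he hsrc => ?_) (fun f' hf' => ?_) (le_refl (Δ.depth _)) hbypass)
  · rw [Finset.mem_erase] at hf' ⊢
    exact ⟨D.edge.injective.ne hf'.1, hedge hf'.2⟩
  · refine Finset.mem_erase.2 ⟨?_, hhigh (D.vmap_src_eq_vmap_dst he ▸ hsrc)⟩
    rintro rfl
    exact D.edge_notMem f he
  · have hdst := (Finset.mem_filter.1 (Finset.mem_of_mem_erase hf')).2
    exact ⟨(depth_src_le_depth_dst f').trans hdst, hdst⟩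

end Cycles

/-! ### Realizability -/

section Realizability

variable {Γ Δ Δ' : ELG n μ} {I I' : Finset ℕ}

theorem UndegenData.connected (D : Γ.UndegenData I Δ) (h : Δ.Connected) : Γ.Connected := by
  have hadj (Γ : ELG n μ) : Γ.Adj = Γ.contractRel Finset.univ := by
    ext a b
    simp [Adj, contractRel]
  obtain ⟨⟨w⟩, hreach⟩ := h
  obtain ⟨v, rfl⟩ := D.vmap_surj w
  refine ⟨⟨v⟩, fun a b => ?_⟩
  rw [hadj]
  exact D.reflTransGen_lift (G := .univ) (fun _ _ => Finset.mem_univ _)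
    (fun _ _ _ => Finset.mem_univ _) (fun _ _ => ⟨trivial, trivial⟩) trivial (hadj Δ ▸ hreach _ _)

/-- The local part of `Realizable`, at a single vertex. -/
structure RealizableAt (Γ : ELG n μ) (v : Γ.V) : Prop where
  stable : 0 < 2 * (Γ.genus v : ℤ) - 2 + (Γ.numLegsAt v : ℤ) + (Γ.numHalfEdgesAt v : ℤ)
  admissible : Γ.deg v = 2 * (Γ.genus v : ℤ) - 2
  hasHighCycleAt : Γ.Inconvenient v → Γ.HasHighCycleAt v

theorem Realizable.realizableAt (h : Γ.Realizable) (v : Γ.V) : Γ.RealizableAt v :=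
  ⟨h.2.1 v, h.2.2.1 v, h.2.2.2.2 v⟩

theorem Realizable.noHorizontal (h : Γ.Realizable) : Γ.NoHorizontal := h.2.2.2.1

theorem UndegenData.realizableAt_of_vmap (D : Γ.UndegenData I Δ) (hΓ : Γ.NoHorizontal) {v : Γ.V}
    (hv : Γ.IsolatesLevel I v) (h : Δ.RealizableAt (D.vmap v)) : Γ.RealizableAt v := by
  have hv' := hv.uncontracted hΓ
  refine ⟨?_, ?_, fun hinc => ?_⟩
  · simpa only [D.genus_vmap hv', D.numLegsAt_vmap hv', D.numHalfEdgesAt_vmap hv'] using h.stable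
  · simpa only [D.genus_vmap hv', D.deg_vmap hv'] using h.admissible
  · exact D.hasHighCycleAt_of_vmap hΓ hv (h.hasHighCycleAt ((D.inconvenient_vmap hv').2 hinc))

theorem Realizable.of_isolatesLevel (hΓ : Γ.NoHorizontal) (D : Γ.UndegenData I Δ)
    (D' : Γ.UndegenData I' Δ') (hΔ : Δ.Realizable) (hΔ' : Δ'.Realizable)
    (h : ∀ v, Γ.IsolatesLevel I v ∨ Γ.IsolatesLevel I' v) : Γ.Realizable := by
  have hv (v : Γ.V) : Γ.RealizableAt v := (h v).elim
    (fun hv => D.realizableAt_of_vmap hΓ hv (hΔ.realizableAt _))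
    (fun hv => D'.realizableAt_of_vmap hΓ hv (hΔ'.realizableAt _))
  exact ⟨D.connected hΔ.1, fun v => (hv v).stable, fun v => (hv v).admissible, hΓ,
    fun v => (hv v).hasHighCycleAt⟩

end Realizability

/-! ### Fibre products of undegenerations -/

section FibreProduct

variable {Γ X Y Z : ELG n μ} {I J K : Finset ℕ}

/-- `Z` is a fibre product of `X` and `Y` over their common undegeneration `Γ`: its vertices form
the pullback and its edges the pushout of those of `X` and `Y`. The condition `uncontracted_or` says
that no vertex of `Γ` is degenerated both in `X` and in `Y`. -/
structure FibreProduct (Z : ELG n μ) (DX : X.UndegenData I Γ) (DY : Y.UndegenData J Γ) where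
  fst : Z.V → X.V
  snd : Z.V → Y.V
  comm : ∀ z, DX.vmap (fst z) = DY.vmap (snd z)
  ext : ∀ {z z'}, fst z = fst z' → snd z = snd z' → z = z'
  exists_lift : ∀ {a b}, DX.vmap a = DY.vmap b → ∃ z, fst z = a ∧ snd z = b
  inl : X.E ↪ Z.E
  inr : Y.E ↪ Z.E
  inl_edge : ∀ f, inl (DX.edge f) = inr (DY.edge f)
  exists_inl_or_inr : ∀ e, (∃ x, inl x = e) ∨ ∃ y, inr y = e
  exists_edge_of_inl_eq_inr : ∀ {x y}, inl x = inr y → ∃ f, DX.edge f = x ∧ DY.edge f = y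
  fst_src : ∀ x, fst (Z.src (inl x)) = X.src x
  fst_dst : ∀ x, fst (Z.dst (inl x)) = X.dst x
  snd_src : ∀ y, snd (Z.src (inr y)) = Y.src y
  snd_dst : ∀ y, snd (Z.dst (inr y)) = Y.dst y
  kappa_inl : ∀ x, Z.kappa (inl x) = X.kappa x
  kappa_inr : ∀ y, Z.kappa (inr y) = Y.kappa y
  fst_legAt : ∀ i, fst (Z.legAt i) = X.legAt i
  snd_legAt : ∀ i, snd (Z.legAt i) = Y.legAt i
  genus_add : ∀ z, Z.genus z + Γ.genus (DX.vmap (fst z)) = X.genus (fst z) + Y.genus (snd z)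
  uncontracted_or : ∀ z, X.Uncontracted I (fst z) ∨ Y.Uncontracted J (snd z)

namespace FibreProduct

variable {DX : X.UndegenData I Γ} {DY : Y.UndegenData J Γ} (P : FibreProduct Z DX DY)

/-- A fibre product with its factors exchanged. -/
def symm : FibreProduct Z DY DX where
  fst := P.snd
  snd := P.fst
  comm z := (P.comm z).symm
  ext h h' := P.ext h' h
  exists_lift h := (P.exists_lift h.symm).imp fun _ hz => hz.symm
  inl := P.inr
  inr := P.inl
  inl_edge f := (P.inl_edge f).symm
  exists_inl_or_inr e := (P.exists_inl_or_inr e).symm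
  exists_edge_of_inl_eq_inr h := (P.exists_edge_of_inl_eq_inr h.symm).imp fun _ hf => hf.symm
  fst_src := P.snd_src
  fst_dst := P.snd_dst
  snd_src := P.fst_src
  snd_dst := P.fst_dst
  kappa_inl := P.kappa_inr
  kappa_inr := P.kappa_inl
  fst_legAt := P.snd_legAt
  snd_legAt := P.fst_legAt
  genus_add z := by rw [← P.comm, P.genus_add, add_comm]
  uncontracted_or z := (P.uncontracted_or z).symm

theorem fst_surjective : Function.Surjective P.fst := fun a => by
  obtain ⟨b, hb⟩ := DY.vmap_surj (DX.vmap a)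
  exact (P.exists_lift hb.symm).imp fun _ hz => hz.1

theorem fst_eq_of_vmap_snd_eq {z z' : Z.V} (hz : ¬ Y.Uncontracted J (P.snd z))
    (h : DY.vmap (P.snd z') = DY.vmap (P.snd z)) : P.fst z' = P.fst z := by
  rwa [← DX.vmap_eq_iff_of_uncontracted ((P.uncontracted_or z).resolve_right hz), P.comm, P.comm]

section Contracted

variable {y : Y.E} (hy : y ∈ Y.contractedEdges J)

include hy

theorem not_uncontracted_src : ¬ Y.Uncontracted J (P.snd (Z.src (P.inr y))) := fun h =>
  (h y hy).1 (P.snd_src y).symm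

theorem not_uncontracted_dst : ¬ Y.Uncontracted J (P.snd (Z.dst (P.inr y))) := fun h =>
  (h y hy).2 (P.snd_dst y).symm

theorem fst_src_eq_fst_dst : P.fst (Z.src (P.inr y)) = P.fst (Z.dst (P.inr y)) :=
  P.fst_eq_of_vmap_snd_eq (P.not_uncontracted_dst hy)
    (by rw [P.snd_src, P.snd_dst, DY.vmap_src_eq_vmap_dst hy])

theorem eq_src_of_snd_eq {z : Z.V} (h : P.snd z = Y.src y) : z = Z.src (P.inr y) := by
  have hsnd := h.trans (P.snd_src y).symm
  exact P.ext (P.fst_eq_of_vmap_snd_eq (P.not_uncontracted_src hy) (congrArg DY.vmap hsnd)) hsnd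

theorem eq_dst_of_snd_eq {z : Z.V} (h : P.snd z = Y.dst y) : z = Z.dst (P.inr y) := by
  have hsnd := h.trans (P.snd_dst y).symm
  exact P.ext (P.fst_eq_of_vmap_snd_eq (P.not_uncontracted_dst hy) (congrArg DY.vmap hsnd)) hsnd

end Contracted

theorem reflTransGen_of_fst_eq {z z' : Z.V} (h : P.fst z = P.fst z') :
    Relation.ReflTransGen (Z.contractRel ((Y.contractedEdges J).map P.inr)) z z' := by
  have hpath := DY.vmap_eq_iff.1 ((P.comm z).symm.trans ((congrArg DX.vmap h).trans (P.comm z')))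
  generalize hb : P.snd z = b at hpath
  induction hpath using Relation.ReflTransGen.head_induction_on generalizing z with
  | refl => rw [P.ext h hb]
  | head hstep _ ih =>
    obtain ⟨y, hy, ⟨hsrc, hdst⟩ | ⟨hsrc, hdst⟩⟩ := hstep
    · obtain rfl := P.eq_src_of_snd_eq hy (hb.trans hsrc.symm)
      exact .head ⟨_, Finset.mem_map_of_mem _ hy, .inl ⟨rfl, rfl⟩⟩
        (ih ((P.fst_src_eq_fst_dst hy).symm.trans h) ((P.snd_dst y).trans hdst))
    · obtain rfl := P.eq_dst_of_snd_eq hy (hb.trans hdst.symm)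
      exact .head ⟨_, Finset.mem_map_of_mem _ hy, .inr ⟨rfl, rfl⟩⟩
        (ih ((P.fst_src_eq_fst_dst hy).trans h) ((P.snd_src y).trans hsrc))

theorem inl_notMem (x : X.E) : P.inl x ∉ (Y.contractedEdges J).map P.inr := by
  rw [Finset.mem_map]
  rintro ⟨y, hy, h⟩
  obtain ⟨f, -, rfl⟩ := P.exists_edge_of_inl_eq_inr h.symm
  exact DY.edge_notMem f hy

theorem mem_or_exists_inl_eq (e : Z.E) :
    e ∈ (Y.contractedEdges J).map P.inr ∨ ∃ x, P.inl x = e := by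
  obtain h | ⟨y, rfl⟩ := P.exists_inl_or_inr e
  · exact .inr h
  · by_cases hy : y ∈ Y.contractedEdges J
    · exact .inl (Finset.mem_map_of_mem _ hy)
    · obtain ⟨f, rfl⟩ := DY.exists_edge_eq hy
      exact .inr ⟨_, P.inl_edge f⟩

theorem genus_sub_one_of_uncontracted {w : X.V} (hw : X.Uncontracted I w) :
    (X.genus w : ℤ) - 1 = ∑ z with P.fst z = w, ((Z.genus z : ℤ) - 1)
      + (((Y.contractedEdges J).map P.inr).filter fun e => P.fst (Z.src e) = w).card := by
  have hfst (z : Z.V) : P.fst z = w ↔ DY.vmap (P.snd z) = DX.vmap w := by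
    rw [← P.comm, DX.vmap_eq_iff_of_uncontracted hw]
  have hvertices : ∑ z with P.fst z = w, ((Z.genus z : ℤ) - 1)
      = ∑ b with DY.vmap b = DX.vmap w, ((Y.genus b : ℤ) - 1) := by
    refine Finset.sum_bij (fun z _ => P.snd z) ?_ ?_ ?_ ?_
    · intro z hz
      simpa [hfst] using hz
    · intro z hz z' hz' h
      exact P.ext ((Finset.mem_filter.1 hz).2.trans (Finset.mem_filter.1 hz').2.symm) h
    · intro b hb
      obtain ⟨z, hz, rfl⟩ := P.exists_lift (Finset.mem_filter.1 hb).2.symm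
      exact ⟨z, by simpa using hz, rfl⟩
    · intro z hz
      have := P.genus_add z
      rw [(Finset.mem_filter.1 hz).2, DX.genus_vmap hw] at this
      omega
  have hedges : (((Y.contractedEdges J).map P.inr).filter fun e => P.fst (Z.src e) = w).card
      = ((Y.contractedEdges J).filter fun y => DY.vmap (Y.src y) = DX.vmap w).card := by
    simp only [Finset.card_filter, Finset.sum_map, hfst, P.snd_src]
  rw [hvertices, hedges, ← DY.genus_sub_one, DX.genus_vmap hw]

theorem genus_sub_one_of_not_uncontracted {w : X.V} (hw : ¬ X.Uncontracted I w) :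
    (X.genus w : ℤ) - 1 = ∑ z with P.fst z = w, ((Z.genus z : ℤ) - 1)
      + (((Y.contractedEdges J).map P.inr).filter fun e => P.fst (Z.src e) = w).card := by
  obtain ⟨b, hb⟩ := DY.vmap_surj (DX.vmap w)
  obtain ⟨z, rfl, rfl⟩ := P.exists_lift hb.symm
  have hz := (P.uncontracted_or z).resolve_left hw
  have hvertices : ({z' | P.fst z' = P.fst z} : Finset Z.V) = {z} := by
    ext z'
    simp only [Finset.mem_filter, Finset.mem_univ, true_and, Finset.mem_singleton]
    refine ⟨fun h => P.ext h ?_, congrArg P.fst⟩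
    rw [← DY.vmap_eq_iff_of_uncontracted hz, ← P.comm, ← P.comm, h]
  have hedges :
      (((Y.contractedEdges J).map P.inr).filter fun e => P.fst (Z.src e) = P.fst z) = ∅ := by
    refine Finset.filter_eq_empty_iff.2 fun e he h => hw ?_
    obtain ⟨y, hy, rfl⟩ := Finset.mem_map.1 he
    exact h ▸ (P.uncontracted_or _).resolve_right (P.not_uncontracted_src hy)
  have := P.genus_add z
  rw [P.comm, DY.genus_vmap hz] at this
  rw [hvertices, hedges, Finset.sum_singleton, Finset.card_empty]
  omega

theorem genus_sub_one (w : X.V) :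
    (X.genus w : ℤ) - 1 = ∑ z with P.fst z = w, ((Z.genus z : ℤ) - 1)
      + (((Y.contractedEdges J).map P.inr).filter fun e => P.fst (Z.src e) = w).card := by
  by_cases hw : X.Uncontracted I w
  · exact P.genus_sub_one_of_uncontracted hw
  · exact P.genus_sub_one_of_not_uncontracted hw

theorem contractedEdges_eq (hX : X.NoHorizontal)
    (hdepth : ∀ z, X.depth (P.fst z) = passageCount K (Z.depth z)) :
    Z.contractedEdges K = (Y.contractedEdges J).map P.inr := by
  ext e
  rw [mem_contractedEdges, ← hdepth, ← hdepth]
  obtain he | ⟨x, rfl⟩ := P.mem_or_exists_inl_eq e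
  · refine iff_of_true ?_ he
    obtain ⟨y, hy, rfl⟩ := Finset.mem_map.1 he
    rw [P.fst_src_eq_fst_dst hy]
  · rw [P.fst_src, P.fst_dst]
    exact iff_of_false (hX.depth_src_ne x) (P.inl_notMem x)

/-- The first projection of a fibre product, as an undegeneration. -/
noncomputable def undegenFst (hX : X.NoHorizontal)
    (hdepth : ∀ z, X.depth (P.fst z) = passageCount K (Z.depth z)) (hL : X.L = K.card) :
    Z.UndegenData K X :=
  have hK := P.contractedEdges_eq hX hdepth
  .ofEdge P.fst P.inl P.fst_surjective
    (fun e he => by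
      obtain ⟨y, hy, rfl⟩ := Finset.mem_map.1 (hK ▸ he)
      exact P.fst_src_eq_fst_dst hy)
    (fun _ _ h => hK ▸ P.reflTransGen_of_fst_eq h)
    (fun e => hK ▸ ⟨(P.mem_or_exists_inl_eq e).resolve_left, by
      rintro ⟨x, rfl⟩
      exact P.inl_notMem x⟩)
    P.fst_src P.fst_dst P.kappa_inl (fun i => (P.fst_legAt i).symm)
    (fun w => hK ▸ P.genus_sub_one w) hdepth hL

end FibreProduct

end FibreProduct

/-! ### Gluing -/

section Gluing

theorem noHorizontal_iff_kappa_ne_zero {Γ : ELG n μ} : Γ.NoHorizontal ↔ ∀ e, Γ.kappa e ≠ 0 :=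
  forall_congr' fun e => (Γ.kappa_zero_iff e).not.symm

/-- Two graphs `X` and `Y` without horizontal edges, sharing the two-level graph `Γ` cut out by the
lowest level passage `k + 1` of `X` and the highest level passage `1` of `Y`. -/
structure GluingDatum (k l : ℕ) (X Y Γ : ELG n μ) where
  left : X.UndegenData {k + 1} Γ
  right : Y.UndegenData {1} Γ
  noHorizontal_left : X.NoHorizontal
  noHorizontal_right : Y.NoHorizontal
  L_left : X.L = k + 1
  L_right : Y.L = l + 1

namespace GluingDatum

variable {k l : ℕ} {X Y Γ : ELG n μ} (G : GluingDatum k l X Y Γ)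

/-- The vertices of the glued graph: the fibre product of those of `X` and `Y` over `Γ`. -/
abbrev Vertex : Type := {p : X.V × Y.V // G.left.vmap p.1 = G.right.vmap p.2}

/-- The edges of the glued graph: those of `Γ` and those contracted in `X` or in `Y`. -/
abbrev Edge (_ : GluingDatum k l X Y Γ) : Type :=
  {x // x ∈ X.contractedEdges {k + 1}} ⊕ Γ.E ⊕ {y // y ∈ Y.contractedEdges {1}}

/-- The depth in the glued graph, by inclusion-exclusion: that of `X` on the upper level of `Γ`, and
`k` more than that of `Y` on the lower one. -/
def depth (p : G.Vertex) : ℕ := X.depth p.1.1 + Y.depth p.1.2 - Γ.depth (G.left.vmap p.1.1)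

theorem depth_cases (p : G.Vertex) :
    (X.depth p.1.1 ≤ k ∧ Y.depth p.1.2 = 0 ∧ G.depth p = X.depth p.1.1) ∨
      (X.depth p.1.1 = k + 1 ∧ 1 ≤ Y.depth p.1.2 ∧ G.depth p = k + Y.depth p.1.2) := by
  have hX := G.left.depth_vmap p.1.1
  have hY := G.right.depth_vmap p.1.2
  have hle := depth_le p.1.1
  rw [← p.2] at hY
  rw [passageCount_singleton] at hX hY
  rw [G.L_left] at hle
  rw [depth]
  split_ifs at hX hY <;> omega

theorem depth_left_eq_passageCount (p : G.Vertex) :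
    X.depth p.1.1 = passageCount (Finset.Icc 1 (k + 1)) (G.depth p) := by
  have := G.depth_cases p
  rw [passageCount_Icc_one]
  omega

theorem depth_right_eq_passageCount (p : G.Vertex) :
    Y.depth p.1.2 = passageCount (Finset.Icc (k + 1) (k + (l + 1))) (G.depth p) := by
  have := G.depth_cases p
  have hle := depth_le p.1.2
  rw [G.L_right] at hle
  rw [passageCount_Icc]
  omega

/-- A vertex of the glued graph over a given vertex of `X`. -/
noncomputable def overLeft (a : X.V) : G.Vertex :=
  ⟨(a, Function.surjInv G.right.vmap_surj (G.left.vmap a)), (Function.surjInv_eq _ _).symm⟩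

/-- A vertex of the glued graph over a given vertex of `Y`. -/
noncomputable def overRight (b : Y.V) : G.Vertex :=
  ⟨(Function.surjInv G.left.vmap_surj (G.right.vmap b), b), Function.surjInv_eq _ _⟩

theorem exists_depth_eq {m : ℕ} (hm : m ≤ k + (l + 1)) : ∃ p, G.depth p = m := by
  by_cases hmk : m ≤ k
  · obtain ⟨a, ha⟩ := ELG.exists_depth_eq (Γ := X) (m := m) (by rw [G.L_left]; omega)
    have : X.depth (G.overLeft a).1.1 = m := ha
    exact ⟨G.overLeft a, by have := G.depth_cases (G.overLeft a); omega⟩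
  · obtain ⟨b, hb⟩ := ELG.exists_depth_eq (Γ := Y) (m := m - k) (by rw [G.L_right]; omega)
    have : Y.depth (G.overRight b).1.2 = m - k := hb
    exact ⟨G.overRight b, by have := G.depth_cases (G.overRight b); omega⟩

/-- The ends of the edges of the glued graph, given the corresponding ends (upper or lower) in `X`
and `Y`. The end of an edge contracted in `X` lies over a vertex of `Γ` which is not degenerated in
`Y`, so that there is only one choice for its component in `Y`. -/
noncomputable def endpoint (endX : X.E → X.V) (endY : Y.E → Y.V)
    (h : ∀ f, G.left.vmap (endX (G.left.edge f)) = G.right.vmap (endY (G.right.edge f))) :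
    G.Edge → G.Vertex
  | .inl x => G.overLeft (endX x)
  | .inr (.inl f) => ⟨(endX (G.left.edge f), endY (G.right.edge f)), h f⟩
  | .inr (.inr y) => G.overRight (endY y)

/-- The edges of `X` as edges of the glued graph. -/
def leftEdge : X.E ↪ G.Edge :=
  G.left.edgeDecomp.symm.toEmbedding.trans (.sumMap (.refl _) .inl)

/-- The edges of `Y` as edges of the glued graph. -/
def rightEdge : Y.E ↪ G.Edge :=
  (G.right.edgeDecomp.symm.trans (Equiv.sumComm _ _)).toEmbedding.trans .inr

/-- The upper end of an edge of the glued graph. -/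
noncomputable def src : G.Edge → G.Vertex := G.endpoint X.src Y.src fun f => by
  rw [G.left.vmap_src_edge, G.right.vmap_src_edge]

/-- The lower end of an edge of the glued graph. -/
noncomputable def dst : G.Edge → G.Vertex := G.endpoint X.dst Y.dst fun f => by
  rw [G.left.vmap_dst_edge, G.right.vmap_dst_edge]

/-- The enhancement of the glued graph. -/
def kappa : G.Edge → ℕ :=
  Sum.elim (fun x => X.kappa x) (Sum.elim Γ.kappa fun y => Y.kappa y)

theorem leftEdge_edgeDecomp_inl (x) : G.leftEdge (G.left.edgeDecomp (.inl x)) = .inl x := by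
  simp [leftEdge]

theorem leftEdge_edge (f : Γ.E) : G.leftEdge (G.left.edge f) = .inr (.inl f) :=
  congrArg (Sum.map id Sum.inl) (G.left.edgeDecomp.symm_apply_apply (.inr f))

theorem rightEdge_edgeDecomp_inl (y) :
    G.rightEdge (G.right.edgeDecomp (.inl y)) = .inr (.inr y) := by
  simp [rightEdge]

theorem rightEdge_edge (f : Γ.E) : G.rightEdge (G.right.edge f) = .inr (.inl f) :=
  congrArg (Sum.inr ∘ Sum.swap) (G.right.edgeDecomp.symm_apply_apply (.inr f))

theorem exists_leftEdge_or_rightEdge :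
    ∀ e, (∃ x, G.leftEdge x = e) ∨ ∃ y, G.rightEdge y = e
  | .inl _ => .inl ⟨_, G.leftEdge_edgeDecomp_inl _⟩
  | .inr (.inl f) => .inl ⟨_, G.leftEdge_edge f⟩
  | .inr (.inr _) => .inr ⟨_, G.rightEdge_edgeDecomp_inl _⟩

theorem exists_edge_of_leftEdge_eq_rightEdge {x : X.E} {y : Y.E}
    (h : G.leftEdge x = G.rightEdge y) : ∃ f, G.left.edge f = x ∧ G.right.edge f = y := by
  obtain ⟨x | f, rfl⟩ := G.left.edgeDecomp.surjective x
  · rw [leftEdge_edgeDecomp_inl] at h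
    exact absurd h Sum.inl_ne_inr
  · refine ⟨f, rfl, G.rightEdge.injective ?_⟩
    exact (G.rightEdge_edge f).trans ((G.leftEdge_edge f).symm.trans h)

theorem endpoint_leftEdge (endX : X.E → X.V) (endY : Y.E → Y.V) (h) (x : X.E) :
    (G.endpoint endX endY h (G.leftEdge x)).1.1 = endX x := by
  obtain ⟨x | f, rfl⟩ := G.left.edgeDecomp.surjective x
  · rw [leftEdge_edgeDecomp_inl]
    rfl
  · exact congrArg (fun e => (G.endpoint endX endY h e).1.1) (G.leftEdge_edge f)

theorem endpoint_rightEdge (endX : X.E → X.V) (endY : Y.E → Y.V) (h) (y : Y.E) :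
    (G.endpoint endX endY h (G.rightEdge y)).1.2 = endY y := by
  obtain ⟨y | f, rfl⟩ := G.right.edgeDecomp.surjective y
  · rw [rightEdge_edgeDecomp_inl]
    rfl
  · exact congrArg (fun e => (G.endpoint endX endY h e).1.2) (G.rightEdge_edge f)

theorem kappa_leftEdge (x : X.E) : G.kappa (G.leftEdge x) = X.kappa x := by
  obtain ⟨x | f, rfl⟩ := G.left.edgeDecomp.surjective x
  · rw [leftEdge_edgeDecomp_inl]
    rfl
  · exact (congrArg G.kappa (G.leftEdge_edge f)).trans (G.left.kappa_edge f).symm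

theorem kappa_rightEdge (y : Y.E) : G.kappa (G.rightEdge y) = Y.kappa y := by
  obtain ⟨y | f, rfl⟩ := G.right.edgeDecomp.surjective y
  · rw [rightEdge_edgeDecomp_inl]
    rfl
  · exact (congrArg G.kappa (G.rightEdge_edge f)).trans (G.right.kappa_edge f).symm

theorem src_leftEdge (x : X.E) : (G.src (G.leftEdge x)).1.1 = X.src x :=
  G.endpoint_leftEdge _ _ _ x

theorem dst_leftEdge (x : X.E) : (G.dst (G.leftEdge x)).1.1 = X.dst x :=
  G.endpoint_leftEdge _ _ _ x

theorem src_rightEdge (y : Y.E) : (G.src (G.rightEdge y)).1.2 = Y.src y :=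
  G.endpoint_rightEdge _ _ _ y

theorem dst_rightEdge (y : Y.E) : (G.dst (G.rightEdge y)).1.2 = Y.dst y :=
  G.endpoint_rightEdge _ _ _ y

theorem depth_src_lt_depth_dst (e : G.Edge) : G.depth (G.src e) < G.depth (G.dst e) := by
  obtain ⟨x, rfl⟩ | ⟨y, rfl⟩ := G.exists_leftEdge_or_rightEdge e
  · refine (passageCount_mono (.Icc 1 (k + 1))).reflect_lt ?_
    rw [← depth_left_eq_passageCount, ← depth_left_eq_passageCount, src_leftEdge, dst_leftEdge]
    exact (depth_src_le_depth_dst x).lt_of_ne (G.noHorizontal_left.depth_src_ne x)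
  · refine (passageCount_mono (.Icc (k + 1) (k + (l + 1)))).reflect_lt ?_
    rw [← depth_right_eq_passageCount, ← depth_right_eq_passageCount, src_rightEdge, dst_rightEdge]
    exact (depth_src_le_depth_dst y).lt_of_ne (G.noHorizontal_right.depth_src_ne y)

theorem kappa_ne_zero (e : G.Edge) : G.kappa e ≠ 0 := by
  obtain ⟨x, rfl⟩ | ⟨y, rfl⟩ := G.exists_leftEdge_or_rightEdge e
  · rw [kappa_leftEdge]
    exact noHorizontal_iff_kappa_ne_zero.1 G.noHorizontal_left x
  · rw [kappa_rightEdge]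
    exact noHorizontal_iff_kappa_ne_zero.1 G.noHorizontal_right y

theorem depth_le (p : G.Vertex) : G.depth p ≤ k + (l + 1) := by
  have := G.depth_cases p
  have := G.L_right ▸ ELG.depth_le p.1.2
  omega

/-- The graph glued from `X` and `Y`, which has the levels of `X` above those of `Y`, the lowest
level passage of `X` being identified with the highest one of `Y`. -/
noncomputable def graph : ELG n μ where
  V := G.Vertex
  E := G.Edge
  fintypeV := inferInstance
  decEqV := inferInstance
  fintypeE := inferInstance
  decEqE := inferInstance
  src := G.src
  dst := G.dst
  legAt i := ⟨(X.legAt i, Y.legAt i), by rw [← G.left.leg_map, ← G.right.leg_map]⟩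
  genus p := X.genus p.1.1 + Y.genus p.1.2 - Γ.genus (G.left.vmap p.1.1)
  level p := -(G.depth p : ℤ)
  L := k + (l + 1)
  level_mem p := ⟨neg_le_neg (mod_cast G.depth_le p), by simp⟩
  level_surj j := by
    obtain ⟨p, hp⟩ := G.exists_depth_eq (Nat.le_of_lt_succ j.2)
    exact ⟨p, by rw [hp]⟩
  level_mono e := neg_le_neg (mod_cast (G.depth_src_lt_depth_dst e).le)
  kappa := G.kappa
  kappa_zero_iff e := iff_of_false (G.kappa_ne_zero e) fun h =>
    (G.depth_src_lt_depth_dst e).ne (Nat.cast_injective (neg_injective h))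

theorem depth_graph (p : G.graph.V) : G.graph.depth p = G.depth p := by
  simp [ELG.depth, graph]

theorem noHorizontal_graph : G.graph.NoHorizontal :=
  noHorizontal_iff_kappa_ne_zero.2 G.kappa_ne_zero

theorem uncontracted_or (p : G.Vertex) :
    X.Uncontracted {k + 1} p.1.1 ∨ Y.Uncontracted {1} p.1.2 := by
  refine (G.depth_cases p).symm.imp (fun ⟨hX, _, _⟩ => ?_) fun ⟨_, hY, _⟩ => ?_
  · refine IsolatesLevel.uncontracted (fun a h => ?_) G.noHorizontal_left
    have := G.L_left ▸ ELG.depth_le a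
    rw [hX] at h ⊢
    rw [passageCount_singleton, passageCount_singleton] at h
    split_ifs at h <;> omega
  · refine IsolatesLevel.uncontracted (fun b h => ?_) G.noHorizontal_right
    rw [hY] at h ⊢
    rw [passageCount_singleton, passageCount_singleton] at h
    split_ifs at h <;> omega

theorem genus_add (p : G.Vertex) :
    G.graph.genus p + Γ.genus (G.left.vmap p.1.1) = X.genus p.1.1 + Y.genus p.1.2 := by
  refine Nat.sub_add_cancel ?_
  obtain h | h := G.uncontracted_or p
  · rw [G.left.genus_vmap h]
    exact Nat.le_add_right _ _
  · rw [p.2, G.right.genus_vmap h]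
    exact Nat.le_add_left _ _

/-- The glued graph is a fibre product of `X` and `Y` over `Γ`. -/
def fibreProduct : FibreProduct G.graph G.left G.right where
  fst p := p.1.1
  snd p := p.1.2
  comm p := p.2
  ext h h' := Subtype.ext (Prod.ext h h')
  exists_lift {a b} h := ⟨⟨(a, b), h⟩, rfl, rfl⟩
  inl := G.leftEdge
  inr := G.rightEdge
  inl_edge f := (G.leftEdge_edge f).trans (G.rightEdge_edge f).symm
  exists_inl_or_inr := G.exists_leftEdge_or_rightEdge
  exists_edge_of_inl_eq_inr := G.exists_edge_of_leftEdge_eq_rightEdge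
  fst_src := G.src_leftEdge
  fst_dst := G.dst_leftEdge
  snd_src := G.src_rightEdge
  snd_dst := G.dst_rightEdge
  kappa_inl := G.kappa_leftEdge
  kappa_inr := G.kappa_rightEdge
  fst_legAt _ := rfl
  snd_legAt _ := rfl
  genus_add := G.genus_add
  uncontracted_or := G.uncontracted_or

/-- The projection of the glued graph to `X`, as an undegeneration. -/
noncomputable def toLeft : G.graph.UndegenData (.Icc 1 (k + 1)) X :=
  G.fibreProduct.undegenFst G.noHorizontal_left
    (fun p => by rw [depth_graph]; exact G.depth_left_eq_passageCount p) (by simp [G.L_left])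

/-- The projection of the glued graph to `Y`, as an undegeneration. -/
noncomputable def toRight : G.graph.UndegenData (.Icc (k + 1) (k + (l + 1))) Y :=
  G.fibreProduct.symm.undegenFst G.noHorizontal_right
    (fun p => by rw [depth_graph]; exact G.depth_right_eq_passageCount p)
    (by rw [G.L_right, Nat.card_Icc]; omega)

theorem isolatesLevel_or (p : G.graph.V) :
    G.graph.IsolatesLevel (.Icc 1 (k + 1)) p ∨
      G.graph.IsolatesLevel (.Icc (k + 1) (k + (l + 1))) p := by
  refine (le_or_gt (G.depth p) k).imp (fun hp q h => ?_) fun hp q h => ?_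
  · rw [passageCount_Icc_one, passageCount_Icc_one, depth_graph, depth_graph] at h
    rw [depth_graph, depth_graph]
    omega
  · have := G.depth_le p
    have := G.depth_le q
    rw [passageCount_Icc, passageCount_Icc, depth_graph, depth_graph] at h
    rw [depth_graph, depth_graph]
    omega

theorem realizable (hX : X.Realizable) (hY : Y.Realizable) : G.graph.Realizable :=
  .of_isolatesLevel G.noHorizontal_graph G.toLeft G.toRight hX hY G.isolatesLevel_or

theorem isUndegenOf_of_left {j : ℕ} (hj : j ∈ Finset.Icc 1 (k + 1)) {Δ : ELG n μ}
    (h : X.IsUndegenOf {j} Δ) : G.graph.IsUndegenOf {j} Δ := by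
  refine IsUndegenOf.trans (Finset.singleton_subset_iff.2 hj) ⟨G.toLeft⟩ ?_
  rwa [Finset.image_singleton, passageCount_Icc_one, min_eq_left (Finset.mem_Icc.1 hj).2]

theorem isUndegenOf_of_right {j : ℕ} (hj : j ∈ Finset.Icc 1 (l + 1)) {Δ : ELG n μ}
    (h : Y.IsUndegenOf {j} Δ) : G.graph.IsUndegenOf {k + j} Δ := by
  rw [Finset.mem_Icc] at hj
  refine IsUndegenOf.trans (Finset.singleton_subset_iff.2 ?_) ⟨G.toRight⟩ ?_
  · rw [Finset.mem_Icc]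
    omega
  · rwa [Finset.image_singleton, passageCount_Icc, min_eq_left (by omega), Nat.add_sub_cancel_left]

end GluingDatum

end Gluing

end ELG

theorem profile_triple_nonempty_general {n : ℕ} {μ : Fin n → ℤ} {k l : ℕ}
    (Γs : Fin (k + (l + 1)) → ELG n μ)
    (hhead : ProfileNonEmpty fun i : Fin (k + 1) => Γs (i.castLE (by omega)))
    (htail : ProfileNonEmpty fun j : Fin (l + 1) => Γs (j.natAdd k)) : ProfileNonEmpty Γs := by
  obtain ⟨X, hX, hXL, hXΓ⟩ := hhead
  obtain ⟨Y, hY, hYL, hYΓ⟩ := htail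
  obtain ⟨DX⟩ := hXΓ (Fin.last k)
  obtain ⟨DY⟩ := hYΓ 0
  let G : GluingDatum k l X Y (Γs (Fin.natAdd k 0)) :=
    ⟨DX, DY, hX.noHorizontal, hY.noHorizontal, hXL, hYL⟩
  refine ⟨G.graph, G.realizable hX hY, rfl, Fin.addCases (fun i => ?_) fun j => ?_⟩
  · refine G.isUndegenOf_of_left (Finset.mem_Icc.2 ⟨?_, ?_⟩) (hXΓ i.castSucc)
    all_goals rw [Fin.val_castAdd]; omega
  · exact G.isUndegenOf_of_right (Finset.mem_Icc.2 ⟨by omega, by omega⟩) (hYΓ j)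

/-- if the profiles `(Γ₁, Γ₂)` and `(Γ₂, Γ₃)` are non-empty, then
so is the profile `(Γ₁, Γ₂, Γ₃)`. -/
theorem profile_triple_nonempty (n : ℕ) (μ : Fin n → ℤ) (hμ : ∀ i, 0 ≤ μ i)
    (Γ₁ Γ₂ Γ₃ : ELG n μ)
    (h₁ : Γ₁.Realizable) (hL₁ : Γ₁.L = 1)
    (h₂ : Γ₂.Realizable) (hL₂ : Γ₂.L = 1)
    (h₃ : Γ₃.Realizable) (hL₃ : Γ₃.L = 1)
    (h12 : ProfileNonEmpty ![Γ₁, Γ₂]) (h23 : ProfileNonEmpty ![Γ₂, Γ₃]) :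
    ProfileNonEmpty ![Γ₁, Γ₂, Γ₃] := by
  refine profile_triple_nonempty_general (k := 1) (l := 1) ![Γ₁, Γ₂, Γ₃] ?_ ?_
  exacts [by convert h12 using 2 with i; fin_cases i <;> rfl,
    by convert h23 using 2 with j; fin_cases j <;> rfl]
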